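/- arXiv:0707.0425 — 2 statements merged into one kernel-verified Lean document; each statement's English description precedes it below -/
import Mathlib

section
/- For the Gaussian weight e^{-N|z|²/t₀} on ℂ with orthonormal polynomials q_{n,N}(z) = sqrt(N^{n+1}/(π t₀^{n+1} n!)) z^n, the probability of exactly n of N eigenvalues in the disc of radius λ = sqrt(x/N) around 0 equals (∏_{i=1}^N Σ_i(x)) Σ_{i_1<…<i_n} ∏_{j=1}^n (1 - Σ_{i_j}(x))/Σ_{i_j}(x), where Σ_i(x) = e^{-x/t₀} Σ_{j=0}^{i-1} x^j/(j! t₀^j). -/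
open MeasureTheory

open Matrix in
lemma vdm {N : ℕ} (z : Fin N → ℂ) :
    ((∏ i : Fin N, ∏ j ∈ Finset.univ.filter (fun j : Fin N => i < j), ‖z i - z j‖ ^ 2 : ℝ) : ℂ) =
    ∑ σ : Equiv.Perm (Fin N), ∑ τ : Equiv.Perm (Fin N),
      (((Equiv.Perm.sign σ : ℤ) : ℂ) * ((Equiv.Perm.sign τ : ℤ) : ℂ)) *
        ∏ i, (z i ^ (σ i : ℕ) * (starRingEnd ℂ) (z i) ^ (τ i : ℕ)) := by
  have h1 : (vandermonde z).det = ∑ σ : Equiv.Perm (Fin N), ((Equiv.Perm.sign σ : ℤ) : ℂ) * ∏ i, z i ^ (σ i : ℕ) := by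
    rw [← det_transpose, det_apply']
    simp [vandermonde]
  have h2 : ((∏ i : Fin N, ∏ j ∈ Finset.univ.filter (fun j : Fin N => i < j), ‖z i - z j‖ ^ 2 : ℝ) : ℂ) =
     (vandermonde z).det * (starRingEnd ℂ) (vandermonde z).det := by
    rw [det_vandermonde]
    simp only [map_prod, ← Finset.prod_mul_distrib, Complex.ofReal_prod]
    refine Finset.prod_congr rfl fun i _ => ?_
    refine Finset.prod_congr (by ext; simp) fun j _ => ?_
    rw [Complex.mul_conj, Complex.normSq_eq_norm_sq, norm_sub_rev]
  rw [h2, h1, map_sum, Finset.sum_mul_sum]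
  refine Finset.sum_congr rfl fun σ _ => Finset.sum_congr rfl fun τ _ => ?_
  simp only [map_mul, map_prod, map_pow, Finset.prod_mul_distrib, map_intCast]
  ring

/-- key -/
lemma key {N : ℕ} (a : ℝ) (μ : Fin N → Measure ℂ) [∀ i, SigmaFinite (μ i)]
    (m : Fin N → ℕ → ℝ)
    (hint : ∀ i k l, Integrable (fun z : ℂ => (Real.exp (-a * ‖z‖ ^ 2) : ℂ) * (z ^ k * (starRingEnd ℂ) z ^ l)) (μ i))
    (hm : ∀ i k l, ∫ z : ℂ, (Real.exp (-a * ‖z‖ ^ 2) : ℂ) * (z ^ k * (starRingEnd ℂ) z ^ l) ∂(μ i) =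
      if k = l then (m i k : ℂ) else 0) :
    ∫ z : Fin N → ℂ, Real.exp (-a * ∑ i, ‖z i‖ ^ 2) *
          ∏ i : Fin N, ∏ j ∈ Finset.univ.filter (fun j : Fin N => i < j), ‖z i - z j‖ ^ 2
          ∂(Measure.pi μ) = ∑ σ : Equiv.Perm (Fin N), ∏ i, m i (σ i) := by
  rw [← Complex.ofReal_inj, ← integral_complex_ofReal]
  have h1 : ∀ z : Fin N → ℂ, ((Real.exp (-a * ∑ i, ‖z i‖ ^ 2) *
          ∏ i : Fin N, ∏ j ∈ Finset.univ.filter (fun j : Fin N => i < j), ‖z i - z j‖ ^ 2 : ℝ) : ℂ) =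
     ∑ σ : Equiv.Perm (Fin N), ∑ τ : Equiv.Perm (Fin N),
      (((Equiv.Perm.sign σ : ℤ) : ℂ) * ((Equiv.Perm.sign τ : ℤ) : ℂ)) *
        ∏ i, ((Real.exp (-a * ‖z i‖ ^ 2) : ℂ) * (z i ^ (σ i : ℕ) * (starRingEnd ℂ) (z i) ^ (τ i : ℕ))) := by
    intro z
    rw [Complex.ofReal_mul, vdm, Finset.mul_sum]
    refine Finset.sum_congr rfl fun σ _ => ?_
    rw [Finset.mul_sum]
    refine Finset.sum_congr rfl fun τ _ => ?_
    rw [Finset.prod_mul_distrib (f := fun i => ((Real.exp (-a * ‖z i‖ ^ 2) : ℝ) : ℂ)),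
      ← Complex.ofReal_prod, ← Real.exp_sum, ← Finset.mul_sum]
    ring
  have hi : ∀ σ τ : Equiv.Perm (Fin N), Integrable (fun z : Fin N → ℂ => (((Equiv.Perm.sign σ : ℤ) : ℂ) * ((Equiv.Perm.sign τ : ℤ) : ℂ)) *
        ∏ i, ((Real.exp (-a * ‖z i‖ ^ 2) : ℂ) * (z i ^ (σ i : ℕ) * (starRingEnd ℂ) (z i) ^ (τ i : ℕ)))) (Measure.pi μ) := by
    intro σ τ
    exact (Integrable.fintype_prod (f := fun i (z : ℂ) => ((Real.exp (-a * ‖z‖ ^ 2) : ℂ) * (z ^ (σ i : ℕ) * (starRingEnd ℂ) z ^ (τ i : ℕ)))) (fun i => hint i _ _)).const_mul _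
  simp_rw [h1]
  rw [integral_finsetSum _ fun σ _ => integrable_finsetSum _ fun τ _ => hi σ τ]
  rw [Complex.ofReal_sum]
  refine Finset.sum_congr rfl fun σ _ => ?_
  rw [integral_finsetSum _ fun τ _ => hi σ τ, Finset.sum_eq_single σ]
  · rw [integral_const_mul, integral_fintype_prod_eq_prod (fun i (z : ℂ) => ((Real.exp (-a * ‖z‖ ^ 2) : ℂ) * (z ^ (σ i : ℕ) * (starRingEnd ℂ) z ^ (σ i : ℕ))))]
    simp_rw [hm, if_true]
    rw [← Int.cast_mul, ← Units.val_mul, Int.units_mul_self]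
    simp
  · intro τ _ hτ
    rw [integral_const_mul, integral_fintype_prod_eq_prod (fun i (z : ℂ) => ((Real.exp (-a * ‖z‖ ^ 2) : ℂ) * (z ^ (σ i : ℕ) * (starRingEnd ℂ) z ^ (τ i : ℕ))))]
    obtain ⟨i, hi⟩ : ∃ i, σ i ≠ τ i := by
      by_contra! h
      exact hτ (Equiv.ext fun i => (h i).symm)
    rw [Finset.prod_eq_zero (Finset.mem_univ i), mul_zero]
    rw [hm, if_neg]
    exact fun h => hi (Fin.ext h)
  · simp

lemma hasDerivAt_E (k : ℕ) (u : ℝ) :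
    HasDerivAt (fun u : ℝ => Real.exp (-u) * ∑ j ∈ Finset.range (k + 1), u ^ j / (j.factorial : ℝ))
      (-(Real.exp (-u) * u ^ k / (k.factorial : ℝ))) u := by
  have he : HasDerivAt (fun u : ℝ => Real.exp (-u)) (-Real.exp (-u)) u := by
    simpa using (hasDerivAt_neg u).exp
  induction k with
  | zero => simpa using he
  | succ k ih =>
    have h2 := ih.add (he.mul ((hasDerivAt_pow (k + 1) u).div_const ((k + 1).factorial : ℝ)))
    have : (fun u : ℝ => Real.exp (-u) * ∑ j ∈ Finset.range (k + 1 + 1), u ^ j / (j.factorial : ℝ)) =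
      (fun u : ℝ => Real.exp (-u) * ∑ j ∈ Finset.range (k + 1), u ^ j / (j.factorial : ℝ)) +
        (fun u : ℝ => Real.exp (-u)) * fun u => u ^ (k + 1) / ((k + 1).factorial : ℝ) := by
      ext u
      simp only [Pi.add_apply, Pi.mul_apply]
      rw [Finset.sum_range_succ, mul_add]
    rw [this]
    refine h2.congr_deriv ?_
    have hf : (k.factorial : ℝ) ≠ 0 := by positivity
    have : ((k + 1).factorial : ℝ) = (k + 1) * k.factorial := by
      rw [Nat.factorial_succ]; push_cast; ring
    rw [this]
    have hk : (k : ℝ) + 1 ≠ 0 := by positivity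
    simp only [Nat.add_sub_cancel]
    push_cast
    field_simp
    ring

lemma tendsto_E (k : ℕ) :
    Filter.Tendsto (fun u : ℝ => Real.exp (-u) * ∑ j ∈ Finset.range (k + 1), u ^ j / (j.factorial : ℝ))
      Filter.atTop (nhds 0) := by
  simp_rw [Finset.mul_sum]
  rw [← Finset.sum_const_zero (s := Finset.range (k + 1)) (M := ℝ)]
  refine tendsto_finsetSum _ fun j _ => ?_
  have := (Real.tendsto_pow_mul_exp_neg_atTop_nhds_zero j).div_const (j.factorial : ℝ)
  simp only [zero_div] at this
  refine this.congr fun u => ?_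
  ring

lemma radial (a : ℝ) (ha : 0 < a) (k : ℕ) (L : ℝ) (hL : 0 ≤ L) :
    ∫ r in Set.Ioi L, r ^ (2 * k + 1) * Real.exp (-a * r ^ 2) =
      (k.factorial : ℝ) / (2 * a ^ (k + 1)) *
       (Real.exp (-(a * L ^ 2)) * ∑ j ∈ Finset.range (k + 1), (a * L ^ 2) ^ j / (j.factorial : ℝ)) := by
  have hd : ∀ r ∈ Set.Ici L, HasDerivAt (fun r : ℝ => -((k.factorial : ℝ) / (2 * a ^ (k + 1))) *
       (Real.exp (-(a * r ^ 2)) * ∑ j ∈ Finset.range (k + 1), (a * r ^ 2) ^ j / (j.factorial : ℝ)))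
       (r ^ (2 * k + 1) * Real.exp (-a * r ^ 2)) r := by
    intro r _
    have h := (((hasDerivAt_E k (a * r ^ 2)).comp r ((hasDerivAt_pow 2 r).const_mul a))).const_mul
      (-((k.factorial : ℝ) / (2 * a ^ (k + 1))))
    refine h.congr_deriv ?_
    have hf : (k.factorial : ℝ) ≠ 0 := by positivity
    rw [neg_mul a]
    field_simp
    ring
  have ht : Filter.Tendsto (fun r : ℝ => a * r ^ 2) Filter.atTop Filter.atTop :=
    (Filter.tendsto_pow_atTop (by norm_num)).const_mul_atTop ha
  have hl := ((tendsto_E k).comp ht).const_mul (-((k.factorial : ℝ) / (2 * a ^ (k + 1))))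
  rw [integral_Ioi_of_hasDerivAt_of_nonneg' hd _ hl]
  · ring
  · intro r hr
    have : 0 < r := lt_of_le_of_lt hL hr
    positivity

lemma angular (k l : ℕ) : ∫ θ in Set.Ioo (-Real.pi) Real.pi,
    Complex.exp ((((k : ℤ) - (l : ℤ) : ℤ) : ℂ) * Complex.I * θ) = if k = l then 2 * (Real.pi : ℂ) else 0 := by
  rw [← integral_Ioc_eq_integral_Ioo, ← intervalIntegral.integral_of_le (by linarith [Real.pi_pos])]
  split_ifs with h
  · subst h
    simp
    ring
  · have hc : (((k : ℤ) - (l : ℤ) : ℤ) : ℂ) ≠ 0 := by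
      rw [Int.cast_ne_zero]; omega
    rw [integral_exp_mul_complex (mul_ne_zero hc Complex.I_ne_zero)]
    rw [div_eq_zero_iff]
    left
    rw [sub_eq_zero, Complex.exp_eq_exp_iff_exists_int]
    refine ⟨(k : ℤ) - l, ?_⟩
    push_cast
    ring

lemma integrable_mom (a : ℝ) (ha : 0 < a) (k l : ℕ) :
    Integrable (fun z : ℂ => (Real.exp (-a * ‖z‖ ^ 2) : ℂ) * (z ^ k * (starRingEnd ℂ) z ^ l)) := by
  have h1 : Integrable (fun z : ℂ => ‖z‖ ^ ((k + l : ℕ) : ℝ) * Real.exp (-a * ‖z‖ ^ (2 : ℝ))) := by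
    apply Integrable.of_integral_ne_zero
    have h0 : (0 : ℝ) ≤ ((k + l : ℕ) : ℝ) := by positivity
    rw [Complex.integral_rpow_mul_exp_neg_mul_rpow (by norm_num) (by linarith) ha]
    have := Real.Gamma_pos_of_pos (s := (((k + l : ℕ) : ℝ) + 2) / 2) (by positivity)
    have := Real.pi_pos
    positivity
  refine h1.mono' (by fun_prop) (Filter.Eventually.of_forall fun z => ?_)
  simp only [norm_mul, norm_pow, Complex.norm_real, RCLike.norm_conj, Real.rpow_natCast, Real.rpow_two, Real.norm_eq_abs, Real.abs_exp]
  rw [pow_add, mul_comm]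

lemma mom (a : ℝ) (ha : 0 < a) (k l : ℕ) (L : ℝ) (hL : 0 ≤ L) :
    ∫ z in (Metric.ball (0 : ℂ) L)ᶜ, (Real.exp (-a * ‖z‖ ^ 2) : ℂ) * (z ^ k * (starRingEnd ℂ) z ^ l) =
      if k = l then ((Real.pi * (k.factorial : ℝ) / a ^ (k + 1) *
       (Real.exp (-(a * L ^ 2)) * ∑ j ∈ Finset.range (k + 1), (a * L ^ 2) ^ j / (j.factorial : ℝ)) : ℝ) : ℂ) else 0 := by
  rw [← integral_indicator measurableSet_ball.compl, ← Complex.integral_comp_polarCoord_symm,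
    polarCoord_target]
  have h1 : ∀ p ∈ Set.Ioi (0 : ℝ) ×ˢ Set.Ioo (-Real.pi) Real.pi,
     p.1 • (Metric.ball (0 : ℂ) L)ᶜ.indicator (fun z : ℂ => (Real.exp (-a * ‖z‖ ^ 2) : ℂ) * (z ^ k * (starRingEnd ℂ) z ^ l)) (Complex.polarCoord.symm p) =
     (((Set.Ici L).indicator (fun r : ℝ => r ^ (k + l + 1) * Real.exp (-a * r ^ 2)) p.1 : ℝ) : ℂ) *
      Complex.exp ((((k : ℤ) - (l : ℤ) : ℤ) : ℂ) * Complex.I * p.2) := by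
    rintro ⟨r, θ⟩ ⟨hr, -⟩
    simp only [Set.mem_Ioi] at hr
    have hz : Complex.polarCoord.symm (r, θ) = r * Complex.exp (θ * Complex.I) := by
      rw [Complex.polarCoord_symm_apply, Complex.exp_mul_I]
      simp
    have hn : ‖(r : ℂ) * Complex.exp (θ * Complex.I)‖ = r := by
      rw [norm_mul, Complex.norm_exp_ofReal_mul_I, Complex.norm_real, Real.norm_of_nonneg hr.le, mul_one]
    rw [hz]
    by_cases h : L ≤ r
    · rw [Set.indicator_of_mem (by simpa [abs_of_pos hr] using h), Set.indicator_of_mem (by simpa using h)]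
      rw [hn, map_mul, Complex.conj_ofReal, ← Complex.exp_conj]
      simp only [map_mul, Complex.conj_ofReal, Complex.conj_I, mul_pow, ← Complex.exp_nat_mul]
      have : Complex.exp ((((k : ℤ) - (l : ℤ) : ℤ) : ℂ) * Complex.I * θ) = 
        Complex.exp (k * (θ * Complex.I)) * Complex.exp (l * (θ * -Complex.I)) := by
        rw [← Complex.exp_add]
        congr 1
        push_cast
        ring
      rw [this, Complex.real_smul]
      push_cast
      ring
    · rw [Set.indicator_of_notMem (by simpa [abs_of_pos hr] using h), Set.indicator_of_notMem (by simpa using h)]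
      simp
  rw [setIntegral_congr_fun (measurableSet_Ioi.prod measurableSet_Ioo) h1]
  rw [Measure.volume_eq_prod, setIntegral_prod_mul (fun r : ℝ => (((Set.Ici L).indicator (fun r : ℝ => r ^ (k + l + 1) * Real.exp (-a * r ^ 2)) r : ℝ) : ℂ))
    (fun θ : ℝ => Complex.exp ((((k : ℤ) - (l : ℤ) : ℤ) : ℂ) * Complex.I * θ)), angular]
  split_ifs with h
  · subst h
    have hs : (Set.Ioi 0 ∩ Set.Ici L : Set ℝ) =ᵐ[volume] Set.Ioi L := by
      have h3 : (Set.Ioi 0 ∩ Set.Ioi L : Set ℝ) = Set.Ioi L :=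
        Set.inter_eq_right.2 (Set.Ioi_subset_Ioi hL)
      have h4 : (Set.Ioi 0 ∩ Set.Ioi L : Set ℝ) =ᵐ[volume] (Set.Ioi 0 ∩ Set.Ici L : Set ℝ) :=
        (ae_eq_refl _).inter Ioi_ae_eq_Ici
      rw [h3] at h4
      exact h4.symm
    rw [integral_complex_ofReal, setIntegral_indicator measurableSet_Ici, setIntegral_congr_set hs,
      show k + k + 1 = 2 * k + 1 by ring, radial a ha k L hL]
    push_cast
    field_simp
  · simp

lemma exists_perm {N : ℕ} (A B : Finset (Fin N)) (h : A.card = B.card) :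
    ∃ ρ : Equiv.Perm (Fin N), A.map ρ.toEmbedding = B := by
  let e : {x // x ∈ A} ≃ {x // x ∈ B} := Finset.equivOfCardEq h
  refine ⟨e.extendSubtype, ?_⟩
  apply Finset.eq_of_subset_of_card_le
  · intro y hy
    obtain ⟨x, hx, rfl⟩ := Finset.mem_map.1 hy
    exact e.extendSubtype_mem x hx
  · simp [h]

lemma comb {N : ℕ} (F : Finset (Fin N) → ℝ) (A : Finset (Fin N)) :
    (N.choose A.card : ℝ) * ∑ σ : Equiv.Perm (Fin N), F (A.map σ.toEmbedding) =
      (N.factorial : ℝ) * ∑ s ∈ Finset.powersetCard A.card Finset.univ, F s := by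
  have h1 : ∀ B ∈ Finset.powersetCard A.card (Finset.univ : Finset (Fin N)),
      ∑ σ : Equiv.Perm (Fin N), F (B.map σ.toEmbedding) = ∑ σ : Equiv.Perm (Fin N), F (A.map σ.toEmbedding) := by
    intro B hB
    obtain ⟨ρ, rfl⟩ := exists_perm A B (Finset.mem_powersetCard.1 hB).2.symm
    refine Fintype.sum_equiv (Equiv.mulRight ρ) _ _ fun σ => ?_
    rw [Finset.map_map]
    rfl
  have h2 := Finset.sum_congr rfl h1
  rw [Finset.sum_const, Finset.card_powersetCard, Finset.card_univ, Fintype.card_fin, nsmul_eq_mul] at h2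
  rw [← h2, Finset.sum_comm]
  have h3 : ∀ σ : Equiv.Perm (Fin N), ∑ B ∈ Finset.powersetCard A.card (Finset.univ : Finset (Fin N)), F (B.map σ.toEmbedding)
     = ∑ s ∈ Finset.powersetCard A.card Finset.univ, F s := by
    intro σ
    refine Finset.sum_equiv σ.finsetCongr (fun s => ?_) fun s _ => rfl
    simp [Finset.mem_powersetCard]
  simp_rw [h3]
  simp [Fintype.card_perm]

/-- For the Gaussian weight `e^{-N|z|²/t₀}` on `ℂ`, the probability of exactly `n` of `N`
eigenvalues in the disc of radius `λ = √(x/N)` around `0` equals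
`(∏_{i=1}^N Σ_i(x)) Σ_{i₁<…<i_n} ∏_j (1 - Σ_{i_j}(x))/Σ_{i_j}(x)`, where
`Σ_i(x) = e^{-x/t₀} Σ_{j<i} x^j/(j! t₀^j)`. -/
theorem stmt_6 (t₀ : ℝ) (ht₀ : 0 < t₀) (N : ℕ) (hN : 0 < N) (n : ℕ) (hn : n ≤ N)
    (x : ℝ) (hx : 0 < x) (lam : ℝ) (hlam : lam = Real.sqrt (x / N))
    (Z : ℝ)
    (hZ : Z = ∫ z : Fin N → ℂ,
        Real.exp (-((N : ℝ) / t₀) * ∑ i, ‖z i‖ ^ 2) *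
          ∏ i : Fin N, ∏ j ∈ Finset.univ.filter (fun j : Fin N => i < j), ‖z i - z j‖ ^ 2)
    (P : (Fin N → ℂ) → ℝ)
    (hP : ∀ z : Fin N → ℂ, P z = Z⁻¹ *
        Real.exp (-((N : ℝ) / t₀) * ∑ i, ‖z i‖ ^ 2) *
          ∏ i : Fin N, ∏ j ∈ Finset.univ.filter (fun j : Fin N => i < j), ‖z i - z j‖ ^ 2)
    (Sig : ℕ → ℝ)
    (hSig : ∀ i, Sig i = Real.exp (-x / t₀) *
        ∑ j ∈ Finset.range i, x ^ j / ((j.factorial : ℝ) * t₀ ^ j)) :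
    (N.choose n : ℝ) *
      (∫ z in Set.univ.pi (fun i : Fin N =>
          if (i : ℕ) < n then Metric.ball (0 : ℂ) lam else (Metric.ball (0 : ℂ) lam)ᶜ), P z) =
    (∏ i ∈ Finset.range N, Sig (i + 1)) *
      ∑ s ∈ Finset.powersetCard n (Finset.range N),
        ∏ i ∈ s, (1 - Sig (i + 1)) / Sig (i + 1) := by
  obtain ⟨a, ha'⟩ : ∃ a : ℝ, a = (N : ℝ) / t₀ := ⟨_, rfl⟩
  have hN' : (0 : ℝ) < N := by exact_mod_cast hN
  have ha : 0 < a := by rw [ha']; positivity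
  have hlam0 : 0 ≤ lam := by rw [hlam]; positivity
  have hal : a * lam ^ 2 = x / t₀ := by
    rw [hlam, Real.sq_sqrt (by positivity), ha']
    field_simp
  have hS : ∀ k, Real.exp (-(a * lam ^ 2)) * ∑ j ∈ Finset.range (k + 1), (a * lam ^ 2) ^ j / (j.factorial : ℝ)
      = Sig (k + 1) := by
    intro k
    rw [hSig, hal, neg_div]
    congr 1
    refine Finset.sum_congr rfl fun j _ => ?_
    rw [div_pow, div_div, mul_comm (t₀ ^ j)]
  have hSpos : ∀ k, 0 < Sig (k + 1) := by
    intro k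
    rw [hSig]
    refine mul_pos (Real.exp_pos _) (Finset.sum_pos (fun j _ => by positivity) (by simp))
  obtain ⟨c, hc⟩ : ∃ c : ℕ → ℝ, ∀ k, c k = Real.pi * (k.factorial : ℝ) / a ^ (k + 1) := ⟨_, fun _ => rfl⟩
  have hcpos : ∀ k, 0 < c k := by
    intro k
    have := Real.pi_pos
    rw [hc]; positivity
  have hfull : ∀ k l, ∫ z : ℂ, (Real.exp (-a * ‖z‖ ^ 2) : ℂ) * (z ^ k * (starRingEnd ℂ) z ^ l) =
      if k = l then (c k : ℂ) else 0 := by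
    intro k l
    have := mom a ha k l 0 le_rfl
    rw [Metric.ball_zero, Set.compl_empty, Measure.restrict_univ] at this
    rw [this, hc]
    simp [Finset.sum_range_succ']
  have hout : ∀ k l, ∫ z in (Metric.ball (0 : ℂ) lam)ᶜ, (Real.exp (-a * ‖z‖ ^ 2) : ℂ) * (z ^ k * (starRingEnd ℂ) z ^ l) =
      if k = l then ((c k * Sig (k + 1) : ℝ) : ℂ) else 0 := by
    intro k l
    rw [mom a ha k l lam hlam0, hS, hc]
  have hin : ∀ k l, ∫ z in Metric.ball (0 : ℂ) lam, (Real.exp (-a * ‖z‖ ^ 2) : ℂ) * (z ^ k * (starRingEnd ℂ) z ^ l) =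
      if k = l then ((c k * (1 - Sig (k + 1)) : ℝ) : ℂ) else 0 := by
    intro k l
    have h := integral_add_compl (measurableSet_ball (x := (0 : ℂ)) (ε := lam)) (integrable_mom a ha k l)
    rw [hout, hfull] at h
    rw [eq_sub_of_add_eq h]
    split_ifs
    · push_cast; ring
    · simp
  have hZ' : Z = (N.factorial : ℝ) * ∏ i : Fin N, c i := by
    rw [hZ, ← ha', volume_pi, key a (fun _ => volume) (fun _ k => c k) (fun i k l => integrable_mom a ha k l)
      (fun _ => hfull)]
    have : ∀ σ : Equiv.Perm (Fin N), ∏ i, c (σ i) = ∏ i : Fin N, c i :=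
      fun σ => Equiv.prod_comp σ (fun i : Fin N => c i)
    simp [this, Fintype.card_perm]
  let F : Finset (Fin N) → ℝ := fun s => ∏ k, if k ∈ s then 1 - Sig (k + 1) else Sig (k + 1)
  let A : Finset (Fin N) := Finset.univ.filter fun i => (i : ℕ) < n
  have hA : A.card = n := by
    simp only [A]
    rw [Fin.card_filter_val_lt]
    omega
  have hnum : ∫ z in Set.univ.pi (fun i : Fin N =>
          if (i : ℕ) < n then Metric.ball (0 : ℂ) lam else (Metric.ball (0 : ℂ) lam)ᶜ),
        Real.exp (-a * ∑ i, ‖z i‖ ^ 2) *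
          ∏ i : Fin N, ∏ j ∈ Finset.univ.filter (fun j : Fin N => i < j), ‖z i - z j‖ ^ 2 =
      (∏ i : Fin N, c i) * ∑ σ : Equiv.Perm (Fin N), F (A.map σ.toEmbedding) := by
    rw [volume_pi, Measure.restrict_pi_pi,
      key a _ (fun i k => c k * if (i : ℕ) < n then 1 - Sig (k + 1) else Sig (k + 1))
        (fun i k l => (integrable_mom a ha k l).restrict), Finset.mul_sum]
    · refine Finset.sum_congr rfl fun σ _ => ?_
      rw [Finset.prod_mul_distrib, Equiv.prod_comp σ (fun i : Fin N => c i)]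
      congr 1
      simp only [F]
      rw [← Equiv.prod_comp σ (fun k : Fin N =>
        if k ∈ A.map σ.toEmbedding then 1 - Sig ((k : ℕ) + 1) else Sig ((k : ℕ) + 1))]
      refine Finset.prod_congr rfl fun i _ => ?_
      simp [A]
    · intro i k l
      by_cases h : (i : ℕ) < n
      · simp only [h, if_true]
        exact hin k l
      · simp only [h, if_false]
        exact hout k l
  have hmain := comb F A
  rw [hA] at hmain
  have hPint : ∫ z in Set.univ.pi (fun i : Fin N =>
          if (i : ℕ) < n then Metric.ball (0 : ℂ) lam else (Metric.ball (0 : ℂ) lam)ᶜ), P z =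
      Z⁻¹ * ((∏ i : Fin N, c i) * ∑ σ : Equiv.Perm (Fin N), F (A.map σ.toEmbedding)) := by
    rw [← hnum, ← integral_const_mul]
    refine integral_congr_ae (Filter.Eventually.of_forall fun z => ?_)
    simp only [hP, ha', mul_assoc]
  have hC : (∏ i : Fin N, c i) ≠ 0 := Finset.prod_ne_zero_iff.2 fun i _ => (hcpos i).ne'
  have hf : (N.factorial : ℝ) ≠ 0 := by positivity
  have hlhs : (N.choose n : ℝ) * (Z⁻¹ * ((∏ i : Fin N, c i) * ∑ σ : Equiv.Perm (Fin N), F (A.map σ.toEmbedding)))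
      = ∑ s ∈ Finset.powersetCard n Finset.univ, F s := by
    rw [hZ']
    field_simp
    linarith [hmain]
  have hrange : Finset.range N = Finset.univ.map (Fin.valEmbedding (n := N)) := by
    ext i
    simp
  rw [hPint, hlhs, hrange, Finset.powersetCard_map, Finset.sum_map, Finset.mul_sum]
  refine Finset.sum_congr rfl fun s _ => ?_
  simp only [F, RelEmbedding.coe_toEmbedding, Finset.mapEmbedding_apply, Finset.prod_map, Fin.valEmbedding_apply]
  have h5 : ∏ i ∈ s, (1 - Sig ((i : ℕ) + 1)) / Sig ((i : ℕ) + 1) =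
      ∏ i : Fin N, if i ∈ s then (1 - Sig ((i : ℕ) + 1)) / Sig ((i : ℕ) + 1) else 1 := by
    simp
  rw [h5, ← Finset.prod_mul_distrib]
  refine Finset.prod_congr rfl fun i _ => ?_
  have := (hSpos i).ne'
  split_ifs
  · field_simp
  · simp
end

section
/- If h(w) = rw + Σ_{j=0}^d a_j w^{-j} with r > 0 and a_d ≠ 0 parametrizes a positively oriented smooth simple closed curve when restricted to the unit circle, then h restricted to {|w| ≥ 1} is injective and h'(w) ≠ 0 for |w| ≥ 1; in particular h is a biholomorphism from the exterior of the unit disc onto the exterior of the curve. -/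
open Complex

/-- Continuous functions with constant exponential are constant. -/
lemma const_of_exp_const {X : Type*} [TopologicalSpace X] [PreconnectedSpace X] (m : X → ℂ)
    (hm : Continuous m) (he : ∀ x y, exp (m x) = exp (m y)) (x y : X) : m x = m y := by
  have := Complex.isCoveringMap_exp.eq_of_comp_eq hm (continuous_const (y := m y))
    (by funext z; exact Subtype.ext (he z y)) y rfl
  exact congrFun this x

lemma exists_log_plane (g : ℝ × ℝ → ℂ) (hg : Continuous g) (h0 : ∀ p, g p ≠ 0) :
    ∃ l : ℝ × ℝ → ℂ, Continuous l ∧ ∀ p, exp (l p) = g p := by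
  obtain ⟨F, ⟨-, hF⟩, -⟩ := Complex.isCoveringMapOn_exp.existsUnique_continuousMap_lifts
    (A := ℝ × ℝ) ⟨g, hg⟩ (a₀ := (0, 0)) (e₀ := log (g (0, 0))) (exp_log (h0 _)) (fun a => h0 a)
  exact ⟨F, F.continuous, fun p => congrFun hF p⟩

/-- Circle integral of the logarithmic derivative is the increment of a continuous logarithm. -/
lemma circleIntegral_eq_log (f : ℂ → ℂ) (l : ℝ → ℂ) (U : Set ℂ) (hU : IsOpen U)
    (hS : Metric.sphere (0 : ℂ) 1 ⊆ U) (hf : DifferentiableOn ℂ f U) (hl : Continuous l)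
    (hexp : ∀ t, exp (l t) = f (circleMap 0 1 t)) :
    (∮ w in C(0, 1), deriv f w / f w) = l (2 * Real.pi) - l 0 := by
  have hmem : ∀ t, circleMap 0 1 t ∈ U := fun t => hS (circleMap_mem_sphere 0 zero_le_one t)
  have hd : ∀ t : ℝ, HasDerivAt l
      (deriv (circleMap 0 1) t • (deriv f (circleMap 0 1 t) / f (circleMap 0 1 t))) t := by
    intro t
    have h1 : HasDerivAt (fun s : ℝ => f (circleMap 0 1 s))
        (deriv f (circleMap 0 1 t) * deriv (circleMap 0 1) t) t := by
      have ha := (hf.differentiableAt (hU.mem_nhds (hmem t))).hasDerivAt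
      exact ha.comp t (differentiable_circleMap 0 1 t).hasDerivAt
    have hst := Complex.hasStrictDerivAt_exp (l t)
    have h2 := (hst.to_localInverse (exp_ne_zero _)).hasDerivAt
    have h3 := hst.eventually_left_inverse (exp_ne_zero _)
    have h4 := hl.continuousAt.eventually h3
    rw [show (fun s : ℝ => f (circleMap 0 1 s)) = fun s => exp (l s) from
      funext fun s => (hexp s).symm] at h1
    have h5 := (h2.comp t h1)
    have h6 := h5.congr_of_eventuallyEq (f₁ := l) (by
      filter_upwards [h4] with s hs
      simp only [Function.comp_apply]
      rw [hs])
    have e : deriv (circleMap 0 1) t • (deriv f (circleMap 0 1 t) / f (circleMap 0 1 t))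
        = (exp (l t))⁻¹ * (deriv f (circleMap 0 1 t) * deriv (circleMap 0 1) t) := by
      rw [smul_eq_mul, hexp]; ring
    rw [e]
    exact h6
  have hne : ∀ t, f (circleMap 0 1 t) ≠ 0 := fun t => hexp t ▸ exp_ne_zero _
  rw [circleIntegral]
  refine intervalIntegral.integral_eq_sub_of_hasDerivAt (fun t _ => hd t) ?_
  apply Continuous.intervalIntegrable
  have hc := continuous_circleMap 0 1
  have e1 : Continuous fun t : ℝ => f (circleMap 0 1 t) := hf.continuousOn.comp_continuous hc hmem
  have e2 : Continuous fun t : ℝ => deriv f (circleMap 0 1 t) :=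
    (hf.deriv hU).continuousOn.comp_continuous hc hmem
  simp only [deriv_circleMap]
  exact (hc.mul continuous_const).smul (e2.div e1 hne)

/-- Polynomial with zero winding on the circle has no root in the disc. -/
lemma poly_no_root (p : Polynomial ℂ) (hp : ∀ w ∈ Metric.sphere (0 : ℂ) 1, p.eval w ≠ 0)
    (hi : (∮ w in C(0, 1), p.derivative.eval w / p.eval w) = 0) (z : ℂ) (hz : ‖z‖ ≤ 1) :
    p.eval z ≠ 0 := by
  classical
  intro hroot
  have hp0 : p ≠ 0 := by
    rintro rfl
    exact hp 1 (by simp) (by simp)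
  have hsum : (∮ w in C(0, 1), p.derivative.eval w / p.eval w)
      = ∮ w in C(0, 1), ∑ y ∈ p.roots.toFinset, (p.roots.count y : ℂ) * (w - y)⁻¹ := by
    apply circleIntegral.integral_congr zero_le_one
    intro w hw
    simp only
    rw [(IsAlgClosed.splits p).eval_derivative_div_eval_of_ne_zero (hp w hw),
      Finset.sum_multiset_map_count]
    simp
  have hns : ∀ y ∈ p.roots.toFinset, y ∉ Metric.sphere (0 : ℂ) 1 := by
    intro y hy hs
    exact hp y hs (by simpa [hp0] using hy)
  have hint : ∀ y ∈ p.roots.toFinset,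
      CircleIntegrable (fun w => (p.roots.count y : ℂ) * (w - y)⁻¹) 0 1 := by
    intro y hy
    apply ContinuousOn.circleIntegrable zero_le_one
    refine continuousOn_const.mul (ContinuousOn.inv₀ (by fun_prop) ?_)
    intro w hw h0
    exact hns y hy (sub_eq_zero.mp h0 ▸ hw)
  have hval : ∀ y ∈ p.roots.toFinset,
      (∮ w in C(0, 1), (p.roots.count y : ℂ) * (w - y)⁻¹)
        = 2 * Real.pi * I * ((if ‖y‖ < 1 then p.roots.count y else 0 : ℕ) : ℂ) := by
    intro y hy
    rw [circleIntegral.integral_const_mul]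
    split_ifs with hlt
    · rw [circleIntegral.integral_sub_inv_of_mem_ball (by simpa using hlt)]; ring
    · have hgt : 1 < ‖y‖ := by
        have := hns y hy
        simp at this hlt
        exact lt_of_le_of_ne hlt (Ne.symm this)
      have : (∮ w in C(0, 1), (w - y)⁻¹) = 0 := by
        apply DiffContOnCl.circleIntegral_eq_zero zero_le_one
        apply DifferentiableOn.diffContOnCl
        intro w hw
        rw [closure_ball _ one_ne_zero] at hw
        have : w - y ≠ 0 := by
          intro h0
          rw [sub_eq_zero.mp h0] at hw
          simp at hw
          linarith
        exact ((differentiableAt_id.sub_const y).inv this).differentiableWithinAt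
      rw [this]; simp
  rw [hsum, circleIntegral.integral_fun_sum hint, Finset.sum_congr rfl hval, ← Finset.mul_sum,
    ← Nat.cast_sum] at hi
  have h2 : (2 * Real.pi * I : ℂ) ≠ 0 := by simp [Real.pi_ne_zero]
  have h3 := (mul_eq_zero.mp hi).resolve_left h2
  have h4 := Finset.sum_eq_zero_iff.mp (Nat.cast_eq_zero.mp h3)
  have hzr : z ∈ p.roots := by simp [hp0, hroot]
  have h5 := h4 z (by simpa [hp0] using hroot)
  have hzlt : ‖z‖ < 1 := lt_of_le_of_ne hz (fun h => hp z (by simp [h]) hroot)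
  rw [if_pos hzlt] at h5
  exact Multiset.count_ne_zero.mpr hzr h5

/-- A symmetric nonvanishing function on the torus with zero winding on the (reversed) diagonal
has zero winding in each variable. -/
lemma torus_log (l : ℝ × ℝ → ℂ) (hl : Continuous l)
    (hs : ∀ s t, exp (l (s, t)) = exp (l (t, s)))
    (hp : ∀ s t, exp (l (s + 2 * Real.pi, t)) = exp (l (s, t)))
    (hd : l (-(2 * Real.pi), -(2 * Real.pi)) = l (0, 0)) (s t : ℝ) :
    l (s + 2 * Real.pi, t) = l (s, t) := by
  have hsym : ∀ s t, l (s, t) = l (t, s) := by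
    intro s t
    have := const_of_exp_const (fun p : ℝ × ℝ => l (p.1, p.2) - l (p.2, p.1)) (by fun_prop)
      (by intro x y; simp only [exp_sub]; rw [hs x.1, hs y.1]; simp) (s, t) (0, 0)
    simp only [sub_self] at this
    exact sub_eq_zero.mp this
  have h1 := const_of_exp_const (fun p : ℝ × ℝ => l (p.1 + 2 * Real.pi, p.2) - l (p.1, p.2))
    (by fun_prop) (by intro x y; simp only [exp_sub]; rw [hp x.1, hp y.1]; simp)
  have a1 := h1 (s, t) (-(2 * Real.pi), -(2 * Real.pi))
  have a2 := h1 (s, t) (-(2 * Real.pi), 0)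
  simp only [neg_add_cancel] at a1 a2
  rw [hsym 0 (-(2 * Real.pi))] at a1
  have : 2 * (l (s + 2 * Real.pi, t) - l (s, t)) = 0 := by linear_combination a1 + a2 - hd
  have := (mul_eq_zero.mp this).resolve_left two_ne_zero
  exact sub_eq_zero.mp this

/-- Homotopy lemma: zero winding of `G (τ u) ·`, `τ ∈ [0,1]`. -/
lemma homotopy_log (l : ℝ × ℝ → ℂ) (hl : Continuous l)
    (hp : ∀ s t, exp (l (s, t + 2 * Real.pi)) = exp (l (s, t)))
    (hc : ∀ t t', exp (l (0, t)) = exp (l (0, t'))) (s t : ℝ) :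
    l (s, t + 2 * Real.pi) = l (s, t) := by
  have h1 := const_of_exp_const (fun p : ℝ × ℝ => l (p.1, p.2 + 2 * Real.pi) - l (p.1, p.2))
    (by fun_prop) (by intro x y; simp only [exp_sub]; rw [hp x.1, hp y.1]; simp) (s, t) (0, 0)
  have h2 := const_of_exp_const (fun t : ℝ => l (0, t)) (by fun_prop) hc (0 + 2 * Real.pi) 0
  simp only at h1 h2
  rw [h2, sub_self] at h1
  exact sub_eq_zero.mp h1

/-- The divided difference of `h` in the coordinates `u = 1/z`, `v = 1/w`. -/
noncomputable def Gfun (d : ℕ) (r : ℝ) (a : Fin (d + 1) → ℂ) (u v : ℂ) : ℂ :=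
  (r : ℂ) - u * v * ∑ j : Fin (d + 1), a j *
    ∑ k ∈ Finset.range (j : ℕ), u ^ k * v ^ ((j : ℕ) - 1 - k)

lemma Gfun_symm (d : ℕ) (r : ℝ) (a : Fin (d + 1) → ℂ) (u v : ℂ) :
    Gfun d r a u v = Gfun d r a v u := by
  unfold Gfun
  have : ∀ j : Fin (d + 1), ∑ k ∈ Finset.range (j : ℕ), u ^ k * v ^ ((j : ℕ) - 1 - k)
      = ∑ k ∈ Finset.range (j : ℕ), v ^ k * u ^ ((j : ℕ) - 1 - k) := by
    intro j
    rw [← Finset.sum_range_reflect]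
    apply Finset.sum_congr rfl
    intro k hk
    have := Finset.mem_range.mp hk
    rw [show (j : ℕ) - 1 - ((j : ℕ) - 1 - k) = k by omega]; ring
  simp only [this]; ring

lemma Gfun_continuous (d : ℕ) (r : ℝ) (a : Fin (d + 1) → ℂ) :
    Continuous fun p : ℂ × ℂ => Gfun d r a p.1 p.2 := by
  unfold Gfun; fun_prop

lemma Gfun_continuous_comp (d : ℕ) (r : ℝ) (a : Fin (d + 1) → ℂ) {X : Type*} [TopologicalSpace X]
    (f g : X → ℂ) (hf : Continuous f) (hg : Continuous g) :
    Continuous fun x => Gfun d r a (f x) (g x) :=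
  (Gfun_continuous d r a).comp (hf.prodMk hg)

lemma Gfun_zero (d : ℕ) (r : ℝ) (a : Fin (d + 1) → ℂ) (v : ℂ) : Gfun d r a 0 v = r := by
  simp [Gfun]

lemma Gfun_poly (d : ℕ) (r : ℝ) (a : Fin (d + 1) → ℂ) (u : ℂ) :
    ∃ p : Polynomial ℂ, ∀ v, p.eval v = Gfun d r a u v := by
  refine ⟨Polynomial.C (r : ℂ) - Polynomial.C u * Polynomial.X * ∑ j : Fin (d + 1),
    Polynomial.C (a j) * ∑ k ∈ Finset.range (j : ℕ),
      Polynomial.C (u ^ k) * Polynomial.X ^ ((j : ℕ) - 1 - k), ?_⟩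
  intro v
  simp [Gfun, Polynomial.eval_finsetSum]

lemma Gfun_diff (d : ℕ) (r : ℝ) (a : Fin (d + 1) → ℂ) (z w : ℂ) (hz : z ≠ 0) (hw : w ≠ 0) :
    ((r : ℂ) * z + ∑ j : Fin (d + 1), a j * z ^ (-(j : ℤ)))
      - ((r : ℂ) * w + ∑ j : Fin (d + 1), a j * w ^ (-(j : ℤ)))
      = (z - w) * Gfun d r a z⁻¹ w⁻¹ := by
  have key : ∀ j : Fin (d + 1), a j * z ^ (-(j : ℤ)) - a j * w ^ (-(j : ℤ))
      = -((z - w) * (z⁻¹ * w⁻¹) * (a j *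
        ∑ k ∈ Finset.range (j : ℕ), z⁻¹ ^ k * w⁻¹ ^ ((j : ℕ) - 1 - k))) := by
    intro j
    have h1 := (Commute.all z⁻¹ w⁻¹).geom_sum₂_mul (j : ℕ)
    have h2 : (z - w) * (z⁻¹ * w⁻¹) = -(z⁻¹ - w⁻¹) := by field_simp; ring
    have h3 : z ^ (-(j : ℤ)) = z⁻¹ ^ (j : ℕ) := by simp
    have h4 : w ^ (-(j : ℤ)) = w⁻¹ ^ (j : ℕ) := by simp
    rw [h2, h3, h4]
    linear_combination (-a j) * h1
  have hs : ∑ j : Fin (d + 1), a j * z ^ (-(j : ℤ)) - ∑ j : Fin (d + 1), a j * w ^ (-(j : ℤ))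
      = -((z - w) * (z⁻¹ * w⁻¹) * ∑ j : Fin (d + 1), a j *
        ∑ k ∈ Finset.range (j : ℕ), z⁻¹ ^ k * w⁻¹ ^ ((j : ℕ) - 1 - k)) := by
    rw [← Finset.sum_sub_distrib, Finset.sum_congr rfl (fun j _ => key j), Finset.sum_neg_distrib,
      Finset.mul_sum]
  unfold Gfun
  linear_combination hs

/-- If `G u ·` has a single-valued logarithm on the circle it has no zero in the disc. -/
lemma Gfun_ne_of_log (d : ℕ) (r : ℝ) (a : Fin (d + 1) → ℂ) (u : ℂ) (l : ℝ → ℂ)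
    (hl : Continuous l) (hexp : ∀ t, exp (l t) = Gfun d r a u (circleMap 0 1 t))
    (hper : l (2 * Real.pi) = l 0) (v : ℂ) (hv : ‖v‖ ≤ 1) : Gfun d r a u v ≠ 0 := by
  obtain ⟨p, hp⟩ := Gfun_poly d r a u
  rw [← hp]
  have hi := circleIntegral_eq_log (fun w => p.eval w) l Set.univ isOpen_univ (Set.subset_univ _)
    p.differentiable.differentiableOn hl (fun t => by rw [hexp, hp])
  simp only [Polynomial.deriv] at hi
  refine poly_no_root p ?_ (by rw [hi, hper, sub_self]) v hv
  intro w hw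
  obtain ⟨t, rfl⟩ : w ∈ Set.range (circleMap 0 1) := by
    rw [range_circleMap]; simpa using hw
  rw [hp, ← hexp]
  exact exp_ne_zero _


/-- If `h(w) = rw + Σ_{j=0}^d a_j w^{-j}` with `r > 0`, `a_d ≠ 0` parametrizes a positively
oriented smooth simple closed curve on the unit circle (simple: injective there; smooth:
nonvanishing tangent `t(w) = i w h'(w)`; positively oriented: the tangent winds once, i.e.
`(1/2πi) ∮_{|w|=1} t'(w)/t(w) dw = 1`), then `h` is injective on `{|w| ≥ 1}` and `h'(w) ≠ 0`
for `|w| ≥ 1`; in particular `h` restricts to a biholomorphism from the exterior of the unit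
disc onto the exterior of the curve. -/
theorem stmt_7 (d : ℕ) (r : ℝ) (hr : 0 < r) (a : Fin (d + 1) → ℂ)
    (had : a (Fin.last d) ≠ 0)
    (h : ℂ → ℂ)
    (hh : h = fun w : ℂ => (r : ℂ) * w + ∑ j : Fin (d + 1), a j * w ^ (-(j : ℤ)))
    (hinj : Set.InjOn h (Metric.sphere (0 : ℂ) 1))
    (hsmooth : ∀ w ∈ Metric.sphere (0 : ℂ) 1, deriv h w ≠ 0)
    (horient : (∮ w in C(0, 1),
        deriv (fun u : ℂ => u * deriv h u) w / (w * deriv h w)) = 2 * Real.pi * I) :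
    Set.InjOn h {w : ℂ | 1 ≤ ‖w‖} ∧ ∀ w : ℂ, 1 ≤ ‖w‖ → deriv h w ≠ 0 := by

  have hdiff : ∀ z w : ℂ, z ≠ 0 → w ≠ 0 → h z - h w = (z - w) * Gfun d r a z⁻¹ w⁻¹ := by
    intro z w hz hw
    rw [hh]; exact Gfun_diff d r a z w hz hw
  have hder : ∀ w : ℂ, w ≠ 0 → HasDerivAt h (Gfun d r a w⁻¹ w⁻¹) w := by
    intro w hw
    rw [hasDerivAt_iff_tendsto_slope]
    have hc : Filter.Tendsto (fun z : ℂ => Gfun d r a z⁻¹ w⁻¹) (nhdsWithin w {w}ᶜ)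
        (nhds (Gfun d r a w⁻¹ w⁻¹)) := by
      have : ContinuousAt (fun z : ℂ => Gfun d r a z⁻¹ w⁻¹) w :=
        (Gfun_continuous d r a).continuousAt.comp (f := fun z : ℂ => (z⁻¹, w⁻¹))
          ((continuousAt_inv₀ hw).prodMk continuousAt_const)
      exact this.tendsto.mono_left nhdsWithin_le_nhds
    refine hc.congr' ?_
    have h0 : ∀ᶠ z in nhdsWithin w {w}ᶜ, z ≠ 0 :=
      nhdsWithin_le_nhds (isOpen_ne.mem_nhds hw)
    filter_upwards [h0, self_mem_nhdsWithin] with z hz hzw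
    have : z - w ≠ 0 := sub_ne_zero.mpr hzw
    rw [slope_def_field, hdiff z w hz hw]
    field_simp
  have hderiv : ∀ w : ℂ, w ≠ 0 → deriv h w = Gfun d r a w⁻¹ w⁻¹ := fun w hw => (hder w hw).deriv
  have hc0 : ∀ t, circleMap (0 : ℂ) 1 t ≠ 0 := fun t => circleMap_ne_center one_ne_zero
  have hcS : ∀ t, circleMap (0 : ℂ) 1 t ∈ Metric.sphere (0 : ℂ) 1 :=
    fun t => circleMap_mem_sphere 0 zero_le_one t
  have hcinv : ∀ t, (circleMap (0 : ℂ) 1 t)⁻¹ = circleMap 0 1 (-t) := by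
    intro t; simp [circleMap, ← exp_neg]
  -- nonvanishing on the torus
  have htor : ∀ s t, Gfun d r a (circleMap 0 1 s) (circleMap 0 1 t) ≠ 0 := by
    intro s t hG
    rw [← neg_neg s, ← neg_neg t, ← hcinv (-s), ← hcinv (-t)] at hG
    by_cases he : circleMap (0 : ℂ) 1 (-s) = circleMap 0 1 (-t)
    · rw [he, ← hderiv _ (hc0 _)] at hG
      exact hsmooth _ (hcS _) hG
    · have := hdiff _ _ (hc0 (-s)) (hc0 (-t))
      rw [hG, mul_zero] at this
      exact he (hinj (hcS _) (hcS _) (sub_eq_zero.mp this))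
  have hcc := continuous_circleMap 0 1
  have hper : ∀ t, circleMap (0 : ℂ) 1 (t + 2 * Real.pi) = circleMap 0 1 t :=
    periodic_circleMap 0 1
  obtain ⟨l, hl, hle⟩ := exists_log_plane
    (fun p => Gfun d r a (circleMap 0 1 p.1) (circleMap 0 1 p.2))
    (Gfun_continuous_comp d r a _ _ (hcc.comp continuous_fst) (hcc.comp continuous_snd)) (fun p => htor _ _)
  -- diagonal winding
  have hdiag : l (-(2 * Real.pi), -(2 * Real.pi)) = l (0, 0) := by
    have hopen : IsOpen ({0}ᶜ : Set ℂ) := isOpen_compl_singleton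
    have hhd : DifferentiableOn ℂ h {0}ᶜ :=
      fun w hw => (hder w hw).differentiableAt.differentiableWithinAt
    have hfd : DifferentiableOn ℂ (fun u : ℂ => u * deriv h u) {0}ᶜ :=
      differentiableOn_id.mul (hhd.deriv hopen)
    have := circleIntegral_eq_log (fun u : ℂ => u * deriv h u)
      (fun t : ℝ => (t : ℂ) * I + l (-t, -t)) {0}ᶜ hopen
      (fun w hw h0 => by rw [Set.mem_singleton_iff.mp h0] at hw; simp at hw)
      hfd (by fun_prop) (by
        intro t
        rw [exp_add, hle, hderiv _ (hc0 t), hcinv]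
        simp [circleMap])
    rw [horient] at this
    simp only [ofReal_zero, neg_zero] at this
    push_cast at this
    linear_combination -this
  have hw0 := torus_log l hl (fun s t => by rw [hle, hle]; exact Gfun_symm d r a _ _)
    (fun s t => by rw [hle, hle]; simp only [hper]) hdiag
  -- one variable on the circle, the other in the disc
  have hS1 : ∀ t : ℝ, ∀ u : ℂ, ‖u‖ ≤ 1 → Gfun d r a u (circleMap 0 1 t) ≠ 0 := by
    intro t u hu
    rw [Gfun_symm]
    refine Gfun_ne_of_log d r a _ (fun s => l (s, t)) (by fun_prop) (fun s => ?_) ?_ u hu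
    · rw [hle]; exact Gfun_symm d r a _ _
    · have := hw0 0 t
      rwa [zero_add] at this
  -- both variables in the disc
  have hS2 : ∀ u v : ℂ, ‖u‖ ≤ 1 → ‖v‖ ≤ 1 → Gfun d r a u v ≠ 0 := by
    intro u v hu hv
    have hn : ∀ s : ℝ, ‖((max 0 (min 1 s) : ℝ) : ℂ) * u‖ ≤ 1 := by
      intro s
      rw [norm_mul, norm_real, Real.norm_eq_abs, abs_of_nonneg (le_max_left _ _)]
      exact mul_le_one₀ (max_le zero_le_one (min_le_left _ _)) (norm_nonneg _) hu
    have hcl : Continuous fun p : ℝ × ℝ => ((max 0 (min 1 p.1) : ℝ) : ℂ) * u :=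
      (continuous_ofReal.comp
        (continuous_const.max (continuous_const.min continuous_fst))).mul continuous_const
    obtain ⟨m, hm, hme⟩ := exists_log_plane
      (fun p => Gfun d r a (((max 0 (min 1 p.1) : ℝ) : ℂ) * u) (circleMap 0 1 p.2))
      (Gfun_continuous_comp d r a _ _ hcl (hcc.comp continuous_snd))
      (fun p => hS1 _ _ (hn _))
    have hm0 := homotopy_log m hm (fun s t => by rw [hme, hme]; simp only [hper])
      (fun t t' => by rw [hme, hme]; simp [Gfun_zero]) 1 0
    rw [zero_add] at hm0
    refine Gfun_ne_of_log d r a u (fun t => m (1, t)) (by fun_prop) (fun t => ?_) hm0 v hv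
    rw [hme]; simp
  have hne : ∀ w : ℂ, 1 ≤ ‖w‖ → w ≠ 0 := by
    rintro w hw rfl
    simp at hw
    linarith
  have hinv : ∀ w : ℂ, 1 ≤ ‖w‖ → ‖w⁻¹‖ ≤ 1 := by
    intro w hw; rw [norm_inv]; exact inv_le_one_of_one_le₀ hw
  refine ⟨fun z hz w hw he => ?_, fun w hw => ?_⟩
  · have := hdiff z w (hne z hz) (hne w hw)
    rw [he, sub_self] at this
    exact sub_eq_zero.mp ((mul_eq_zero.mp this.symm).resolve_right
      (hS2 _ _ (hinv z hz) (hinv w hw)))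
  · rw [hderiv w (hne w hw)]
    exact hS2 _ _ (hinv w hw) (hinv w hw)
end
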